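/- Enriched Adjoint Triangle Theorem: Let (L ⊣ U, η, ε): 𝔅 → ℭ and (E ⊣ R, ρ, μ): 𝔄 → ℭ be V-adjunctions and J: 𝔄 → 𝔅 a V-functor with L∘J = E. Assume that for each pair of objects (A ∈ 𝔄, Y ∈ 𝔅) the diagram 𝔅(JA, Y) → ℭ(EA, LY) ⇉ ℭ(EA, LULY), whose first arrow is L_{JA,Y} and whose parallel pair consists of ℭ(EA, L(η_Y)) and L_{JA,ULY}∘χ_{(JA,LY)}, is an equalizer in V. Then J has a right V-adjoint G if and only if for each object Y of 𝔅 the V-equalizer of the pair RL(U(μ_{LY})η_{JRLY})ρ_{RLY}, RL(η_Y): RLY ⇉ RLULY exists in 𝔄; in that case GY is given by this V-equalizer. -/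

import Mathlib

/-! Enriched adjoint triangles (Section 1 of "On Biadjoint Triangles", Lucatelli Nunes). -/

open CategoryTheory MonoidalCategory Limits

universe v u u₁ u₂ u₃

namespace EnrichedAdjointTriangles

variable (V : Type u) [Category.{v} V] [MonoidalCategory V] [SymmetricCategory V]
  [MonoidalClosed V] [HasLimits V] [HasColimits V]

section Defs
variable {C : Type u₁} [EnrichedCategory V C]

/-- A generalized element of the `V`-object of morphisms, i.e. a morphism of the
underlying category. -/
abbrev EHom (a b : C) : Type v := (𝟙_ V) ⟶ (a ⟶[V] b)

/-- Composition of generalized elements. -/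
def vcomp {a b c : C} (f : EHom V a b) (g : EHom V b c) : EHom V a c :=
  (λ_ (𝟙_ V)).inv ≫ (f ⊗ₘ g) ≫ eComp V a b c

/-- Post-composition with a generalized element, as a morphism of `V`. -/
def postcompV (W : C) {a b : C} (e : EHom V a b) : ((W ⟶[V] a) : V) ⟶ (W ⟶[V] b) :=
  (ρ_ _).inv ≫ (𝟙 _ ⊗ₘ e) ≫ eComp V W a b

/-- Pre-composition with a generalized element, as a morphism of `V`. -/
def precompV {a b : C} (e : EHom V a b) (c : C) : ((b ⟶[V] c) : V) ⟶ (a ⟶[V] c) :=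
  (λ_ _).inv ≫ (e ⊗ₘ 𝟙 _) ≫ eComp V a b c

/-- `(e, i)` is a conical `V`-equalizer of the pair of morphisms `q, r : a ⟶ b`:
each `V`-valued hom-functor takes it to an equalizer diagram in `V`. -/
structure IsVEqualizer {a b : C} (q r : EHom V a b) (e : C) (i : EHom V e a) : Prop where
  w : ∀ W : C, postcompV V W i ≫ postcompV V W q = postcompV V W i ≫ postcompV V W r
  isLimit : ∀ W : C, Nonempty (IsLimit (Fork.ofι (postcompV V W i) (w W)))

/-- The conical `V`-equalizer of `q` and `r` exists. -/
def HasVEqualizer {a b : C} (q r : EHom V a b) : Prop :=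
  ∃ (e : C) (i : EHom V e a), IsVEqualizer V q r e i

end Defs

section Nat
variable {B : Type u₁} [EnrichedCategory V B] {C : Type u₂} [EnrichedCategory V C]

/-- A `V`-natural transformation between `V`-functors. -/
structure VNat (F G : EnrichedFunctor V B C) where
  app : ∀ X : B, EHom V (F.obj X) (G.obj X)
  naturality :
    ∀ X Y : B,
      (ρ_ _).inv ≫ (F.map X Y ⊗ₘ app Y) ≫ eComp V (F.obj X) (F.obj Y) (G.obj Y) =
        (λ_ _).inv ≫ (app X ⊗ₘ G.map X Y) ≫ eComp V (F.obj X) (G.obj X) (G.obj Y)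

/-- A `V`-adjunction `(L ⊣ U, η, ε)`, given by unit and counit `V`-natural
transformations satisfying the triangle identities. -/
structure VAdjunction (L : EnrichedFunctor V B C) (U : EnrichedFunctor V C B) where
  η : VNat V (EnrichedFunctor.id V B) (EnrichedFunctor.comp V L U)
  ε : VNat V (EnrichedFunctor.comp V U L) (EnrichedFunctor.id V C)
  left_triangle :
    ∀ X : B,
      vcomp V (η.app X ≫ L.map X (U.obj (L.obj X))) (ε.app (L.obj X)) = eId V (L.obj X)
  right_triangle :
    ∀ Y : C,
      vcomp V (η.app (U.obj Y)) (ε.app Y ≫ U.map (L.obj (U.obj Y)) Y) = eId V (U.obj Y)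

end Nat

section Triangle

variable {A : Type u₁} [EnrichedCategory V A] {B : Type u₂} [EnrichedCategory V B]
  {C : Type u₃} [EnrichedCategory V C]
  (J : EnrichedFunctor V A B) (L : EnrichedFunctor V B C) (R : EnrichedFunctor V C A)
  (U : EnrichedFunctor V C B)
  (adj1 : VAdjunction V (EnrichedFunctor.comp V J L) R) (adj2 : VAdjunction V L U)

/-- The generalized element `L(η_Y) : LY ⟶ LULY`. -/
def Lη (Y : B) : EHom V (L.obj Y) (L.obj (U.obj (L.obj Y))) :=
  adj2.η.app Y ≫ L.map Y (U.obj (L.obj Y))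

/-- `ℭ(EA, L(η_Y))`, the first leg of the parallel pair. -/
def parallelFst (A' : A) (Y : B) :
    ((L.obj (J.obj A') ⟶[V] L.obj Y) : V) ⟶
      (L.obj (J.obj A') ⟶[V] L.obj (U.obj (L.obj Y))) :=
  postcompV V (L.obj (J.obj A')) (Lη V L U adj2 Y)

/-- `L_{JA, ULY} ∘ χ_{(JA, LY)}`, the second leg of the parallel pair:
`f ↦ L(U(f) ∘ η_{JA})`. -/
def parallelSnd (A' : A) (Y : B) :
    ((L.obj (J.obj A') ⟶[V] L.obj Y) : V) ⟶
      (L.obj (J.obj A') ⟶[V] L.obj (U.obj (L.obj Y))) :=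
  U.map (L.obj (J.obj A')) (L.obj Y) ≫
    precompV V (adj2.η.app (J.obj A')) (U.obj (L.obj Y)) ≫
    L.map (J.obj A') (U.obj (L.obj Y))

/-- The generalized element `q_Y = RL(η_Y) : RLY ⟶ RLULY`. -/
def qY (Y : B) :
    EHom V (R.obj (L.obj Y)) (R.obj (L.obj (U.obj (L.obj Y)))) :=
  Lη V L U adj2 Y ≫ R.map (L.obj Y) (L.obj (U.obj (L.obj Y)))

/-- The generalized element `r_Y = RL(U(μ_{LY}) ∘ η_{JRLY}) ∘ ρ_{RLY} : RLY ⟶ RLULY`. -/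
def rY (Y : B) :
    EHom V (R.obj (L.obj Y)) (R.obj (L.obj (U.obj (L.obj Y)))) :=
  vcomp V (adj1.η.app (R.obj (L.obj Y)))
    (vcomp V (adj2.η.app (J.obj (R.obj (L.obj Y))))
        (adj1.ε.app (L.obj Y) ≫
          U.map (L.obj (J.obj (R.obj (L.obj Y)))) (L.obj Y)) ≫
      L.map (J.obj (R.obj (L.obj Y))) (U.obj (L.obj Y)) ≫
      R.map (L.obj (J.obj (R.obj (L.obj Y)))) (L.obj (U.obj (L.obj Y))))

/-- `L` is `V`-precomonadic: for every `Y`, the diagram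
`Y → ULY ⇉ ULULY` is a conical `V`-equalizer. -/
def VPrecomonadic : Prop :=
  ∀ Y : B,
    IsVEqualizer V (adj2.η.app (U.obj (L.obj Y)))
      (Lη V L U adj2 Y ≫ U.map (L.obj Y) (L.obj (U.obj (L.obj Y))))
      Y (adj2.η.app Y)

end Triangle

end EnrichedAdjointTriangles
namespace EnrichedAdjointTriangles


/-!
`J` has a right `V`-adjoint if and only if `B(J -, Y)` is representable for each `Y`. The
hypothesis presents `B(J W, Y)` as the equalizer of a parallel pair out of `C(LJW, LY)`, and under
`A(W, RZ) ≅ C(LJW, Z)` this pair is the image under `A(W, -)` of the pair `r_Y, q_Y`. Hence an arrow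
`i : g ⟶ RLY` equalizing `r_Y` and `q_Y` is the same as an arrow `e : J g ⟶ Y`, and `i` is a
`V`-equalizer if and only if transposition along `e` is an isomorphism `A(W, g) ≅ B(J W, Y)`.
-/

section Calculus

variable {V : Type u} [Category.{v} V] [MonoidalCategory V]
  {A : Type u₁} [EnrichedCategory V A] {B : Type u₂} [EnrichedCategory V B]

lemma postcompV_eq_eHomWhiskerLeft (W : A) {a b : A} (e : EHom V a b) :
    postcompV V W e =
      eHomWhiskerLeft V (ForgetEnrichment.of V W) (ForgetEnrichment.homOf V e) := by
  rw [postcompV, id_tensorHom]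
  rfl

lemma precompV_eq_eHomWhiskerRight {a b : A} (e : EHom V a b) (c : A) :
    precompV V e c =
      eHomWhiskerRight V (ForgetEnrichment.homOf V e) (ForgetEnrichment.of V c) := by
  rw [precompV, tensorHom_id]
  rfl

lemma ehom_postcompV {a b c : A} (f : EHom V a b) (g : EHom V b c) :
    f ≫ postcompV V a g = vcomp V f g := by
  rw [postcompV, vcomp, rightUnitor_inv_naturality_assoc, id_tensorHom,
    MonoidalCategory.tensorHom_def_assoc, unitors_inv_equal]

lemma ehom_precompV {a b c : A} (f : EHom V a b) (g : EHom V b c) :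
    g ≫ precompV V f c = vcomp V f g := by
  rw [precompV, vcomp, leftUnitor_inv_naturality_assoc, tensorHom_id, tensorHom_def'_assoc]

lemma postcompV_eId (W a : A) : postcompV V W (eId V a) = 𝟙 _ := by
  rw [postcompV, id_tensorHom, e_comp_id]

lemma precompV_eId (a c : A) : precompV V (eId V a) c = 𝟙 _ := by
  rw [precompV, tensorHom_id, e_id_comp]

lemma vcomp_eId {a b : A} (f : EHom V a b) : vcomp V f (eId V b) = f := by
  rw [← ehom_postcompV, postcompV_eId, Category.comp_id]

lemma eId_vcomp {a b : A} (f : EHom V a b) : vcomp V (eId V a) f = f := by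
  rw [← ehom_precompV, precompV_eId, Category.comp_id]

lemma eId_postcompV {a b : A} (f : EHom V a b) : eId V a ≫ postcompV V a f = f := by
  rw [ehom_postcompV, eId_vcomp]

lemma postcompV_vcomp (W : A) {a b c : A} (f : EHom V a b) (g : EHom V b c) :
    postcompV V W (vcomp V f g) = postcompV V W f ≫ postcompV V W g := by
  simp only [postcompV_eq_eHomWhiskerLeft, vcomp, ForgetEnrichment.homOf_comp]
  exact eHomWhiskerLeft_comp V _ _ _

lemma precompV_vcomp {a b c : A} (f : EHom V a b) (g : EHom V b c) (d : A) :
    precompV V (vcomp V f g) d = precompV V g d ≫ precompV V f d := by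
  simp only [precompV_eq_eHomWhiskerRight, vcomp, ForgetEnrichment.homOf_comp]
  exact eHomWhiskerRight_comp V _ _ _

lemma precompV_postcompV {a b c d : A} (f : EHom V a b) (g : EHom V c d) :
    precompV V f c ≫ postcompV V a g = postcompV V b g ≫ precompV V f d := by
  simp only [precompV_eq_eHomWhiskerRight, postcompV_eq_eHomWhiskerLeft]
  exact (eHom_whisker_exchange V _ _).symm

lemma eComp_postcompV (W x : A) {a b : A} (f : EHom V a b) :
    eComp V W x a ≫ postcompV V W f = (_ ◁ postcompV V x f) ≫ eComp V W x b := by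
  simp only [postcompV_eq_eHomWhiskerLeft]
  exact eComp_eHomWhiskerLeft (C := ForgetEnrichment V A) V _ _ _

lemma eComp_precompV {a b : A} (f : EHom V a b) (x c : A) :
    eComp V b x c ≫ precompV V f c = (precompV V f x ▷ _) ≫ eComp V a x c := by
  simp only [precompV_eq_eHomWhiskerRight]
  exact eComp_eHomWhiskerRight (C := ForgetEnrichment V A) V _ _ _

lemma whiskerLeft_precompV_eComp (W : A) {a b : A} (f : EHom V a b) (c : A) :
    (_ ◁ precompV V f c) ≫ eComp V W a c = (postcompV V W f ▷ _) ≫ eComp V W b c := by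
  simp only [postcompV, precompV, id_tensorHom, tensorHom_id, comp_whiskerRight,
    MonoidalCategory.whiskerLeft_comp, Category.assoc]
  rw [← e_assoc']
  simp

lemma map_postcompV (F : EnrichedFunctor V A B) (W : A) {a b : A} (g : EHom V a b) :
    F.map W a ≫ postcompV V (F.obj W) (g ≫ F.map a b) = postcompV V W g ≫ F.map W b := by
  rw [postcompV, postcompV, id_tensorHom, id_tensorHom]
  simp only [Category.assoc, F.map_comp, MonoidalCategory.whiskerLeft_comp,
    MonoidalCategory.tensorHom_def]
  rw [rightUnitor_inv_naturality_assoc, ← whisker_exchange_assoc, ← whisker_exchange_assoc]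

lemma map_precompV (F : EnrichedFunctor V A B) {a b : A} (g : EHom V a b) (W : A) :
    F.map b W ≫ precompV V (g ≫ F.map a b) (F.obj W) = precompV V g W ≫ F.map a W := by
  rw [precompV, precompV, tensorHom_id, tensorHom_id]
  simp only [Category.assoc, F.map_comp, comp_whiskerRight, tensorHom_def']
  rw [leftUnitor_inv_naturality_assoc, whisker_exchange_assoc, whisker_exchange_assoc]

lemma tensorHom_eComp_eq_iff {a a' b b' : A} {M : V} (s : M ⟶ (a ⟶[V] a'))
    (t : M ⟶ (b ⟶[V] b')) (x : EHom V a b) (y : EHom V a' b') :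
    (ρ_ _).inv ≫ (s ⊗ₘ y) ≫ eComp V a a' b' = (λ_ _).inv ≫ (x ⊗ₘ t) ≫ eComp V a b b' ↔
      s ≫ postcompV V a y = t ≫ precompV V x b' := by
  rw [postcompV, precompV, id_tensorHom, tensorHom_id, rightUnitor_inv_naturality_assoc,
    leftUnitor_inv_naturality_assoc, tensorHom_def_assoc, tensorHom_def'_assoc]

end Calculus

section Transpose

variable {V : Type u} [Category.{v} V] [MonoidalCategory V]
  {A : Type u₁} [EnrichedCategory V A] {B : Type u₂} [EnrichedCategory V B]
  {C : Type u₃} [EnrichedCategory V C]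

/-- Transposition along an arrow `e : F g ⟶ Y`: the morphism `A(X, g) ⟶ B(F X, Y)`,
`f ↦ e ∘ F f`, which the Yoneda lemma associates with `e`. -/
def transpose (F : EnrichedFunctor V A B) {g : A} {Y : B} (e : EHom V (F.obj g) Y) (X : A) :
    (X ⟶[V] g) ⟶ (F.obj X ⟶[V] Y) :=
  F.map X g ≫ postcompV V (F.obj X) e

variable (F : EnrichedFunctor V A B) {g : A} {Y : B} (e : EHom V (F.obj g) Y)

lemma ehom_transpose {X : A} (f : EHom V X g) :
    f ≫ transpose F e X = vcomp V (f ≫ F.map X g) e := by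
  rw [transpose, ← Category.assoc, ehom_postcompV]

lemma eId_transpose : eId V g ≫ transpose F e g = e := by
  rw [ehom_transpose, F.map_id, eId_vcomp]

lemma transpose_eId (W X : A) : transpose F (eId V (F.obj X)) W = F.map W X := by
  rw [transpose, postcompV_eId, Category.comp_id]

lemma postcompV_transpose (W : A) {X : A} (f : EHom V X g) :
    postcompV V W f ≫ transpose F e W = transpose F (f ≫ transpose F e X) W := by
  rw [ehom_transpose, transpose, transpose, postcompV_vcomp, ← Category.assoc, ← map_postcompV,
    Category.assoc]

lemma precompV_transpose {W X : A} (f : EHom V W X) :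
    precompV V f g ≫ transpose F e W =
      transpose F e X ≫ precompV V (f ≫ F.map W X) Y := by
  rw [transpose, transpose, ← Category.assoc, ← map_precompV, Category.assoc, Category.assoc,
    precompV_postcompV]

lemma transpose_postcompV {Z : B} (w : EHom V Y Z) (X : A) :
    transpose F e X ≫ postcompV V (F.obj X) w = transpose F (vcomp V e w) X := by
  rw [transpose, transpose, postcompV_vcomp, Category.assoc]

lemma transpose_map (H : EnrichedFunctor V B C) (X : A) :
    transpose F e X ≫ H.map (F.obj X) Y =
      F.map X g ≫ transpose H (e ≫ H.map (F.obj g) Y) (F.obj X) := by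
  rw [transpose, transpose, map_postcompV, Category.assoc]

lemma eComp_transpose (W X : A) :
    eComp V W X g ≫ transpose F e W =
      (F.map W X ⊗ₘ transpose F e X) ≫ eComp V (F.obj W) (F.obj X) Y := by
  simp only [transpose, F.map_comp_assoc, eComp_postcompV, MonoidalCategory.tensorHom_def,
    MonoidalCategory.whiskerLeft_comp, Category.assoc]

end Transpose

namespace VAdjunction

variable {V : Type u} [Category.{v} V] [MonoidalCategory V]
  {A : Type u₁} [EnrichedCategory V A] {B : Type u₂} [EnrichedCategory V B]
  {L : EnrichedFunctor V A B} {U : EnrichedFunctor V B A} (adj : VAdjunction V L U)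

/-- The component `X ⟶ ULX` of the unit, typed without reference to the identity and composite
`V`-functors. -/
def unitApp (X : A) : EHom V X (U.obj (L.obj X)) := adj.η.app X

/-- The component `LUZ ⟶ Z` of the counit, typed without reference to the identity and composite
`V`-functors. -/
def counitApp (Z : B) : EHom V (L.obj (U.obj Z)) Z := adj.ε.app Z

lemma postcompV_unitApp (X Y : A) :
    postcompV V X (adj.unitApp Y) =
      L.map X Y ≫ U.map (L.obj X) (L.obj Y) ≫ precompV V (adj.unitApp X) (U.obj (L.obj Y)) :=
  (Category.id_comp _).symm.trans
    (((tensorHom_eComp_eq_iff _ _ _ _).1 (adj.η.naturality X Y)).trans (Category.assoc _ _ _))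

lemma map_transpose_counitApp (Z Z' : B) :
    U.map Z Z' ≫ transpose L (adj.counitApp Z') (U.obj Z) = precompV V (adj.counitApp Z) Z' :=
  (Category.assoc _ _ _).symm.trans
    (((tensorHom_eComp_eq_iff _ _ _ _).1 (adj.ε.naturality Z Z')).trans (Category.id_comp _))

lemma vcomp_map_unitApp_counitApp (X : A) :
    vcomp V (adj.unitApp X ≫ L.map X (U.obj (L.obj X))) (adj.counitApp (L.obj X)) =
      eId V (L.obj X) :=
  adj.left_triangle X

lemma vcomp_unitApp_map_counitApp (Z : B) :
    vcomp V (adj.unitApp (U.obj Z)) (adj.counitApp Z ≫ U.map (L.obj (U.obj Z)) Z) =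
      eId V (U.obj Z) :=
  adj.right_triangle Z

/-- The isomorphism `A(X, UZ) ≅ B(LX, Z)` of a `V`-adjunction; its inverse is the component
`χ_{(X, Z)}` of the paper. -/
def homIso (X : A) (Z : B) : (X ⟶[V] U.obj Z) ≅ (L.obj X ⟶[V] Z) where
  hom := transpose L (adj.counitApp Z) X
  inv := U.map (L.obj X) Z ≫ precompV V (adj.unitApp X) (U.obj Z)
  hom_inv_id := by
    rw [← Category.assoc, transpose_map, transpose, Category.assoc, Category.assoc,
      ← precompV_postcompV, ← Category.assoc (U.map _ _), ← Category.assoc (L.map _ _),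
      ← postcompV_unitApp, ← postcompV_vcomp, vcomp_unitApp_map_counitApp, postcompV_eId]
  inv_hom_id := by
    rw [Category.assoc, precompV_transpose, ← Category.assoc, map_transpose_counitApp,
      ← precompV_vcomp, vcomp_map_unitApp_counitApp, precompV_eId]

lemma homIso_hom (X : A) (Z : B) : (adj.homIso X Z).hom = transpose L (adj.counitApp Z) X := rfl

lemma homIso_inv (X : A) (Z : B) :
    (adj.homIso X Z).inv = U.map (L.obj X) Z ≫ precompV V (adj.unitApp X) (U.obj Z) := rfl

lemma ehom_homIso_inv {X : A} {Z : B} (w : EHom V (L.obj X) Z) :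
    w ≫ (adj.homIso X Z).inv = vcomp V (adj.unitApp X) (w ≫ U.map (L.obj X) Z) := by
  rw [homIso_inv, ← Category.assoc, ehom_precompV]

lemma postcompV_homIso_hom (W : A) {X : A} {Z : B} (f : EHom V X (U.obj Z)) :
    postcompV V W f ≫ (adj.homIso W Z).hom =
      L.map W X ≫ postcompV V (L.obj W) (f ≫ (adj.homIso X Z).hom) :=
  postcompV_transpose L _ W f

lemma postcompV_map_homIso_hom (W : A) {Z Z' : B} (w : EHom V Z Z') :
    postcompV V W (w ≫ U.map Z Z') ≫ (adj.homIso W Z').hom =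
      (adj.homIso W Z).hom ≫ postcompV V (L.obj W) w := by
  rw [homIso_hom, homIso_hom, postcompV_transpose, Category.assoc, map_transpose_counitApp,
    ehom_precompV, transpose_postcompV]

end VAdjunction

section UniversalArrow

variable {V : Type u} [Category.{v} V] [MonoidalCategory V]
  {A : Type u₁} [EnrichedCategory V A] {B : Type u₂} [EnrichedCategory V B]

/-- The arrow `e : J g ⟶ Y` is `V`-universal from `J` to `Y`: transposition along `e` exhibits `g`
as a representing object of `B(J -, Y)`. -/
def IsUniversalArrow (J : EnrichedFunctor V A B) {g : A} {Y : B} (e : EHom V (J.obj g) Y) : Prop :=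
  ∀ X : A, IsIso (transpose J e X)

variable {J : EnrichedFunctor V A B}

lemma VAdjunction.isUniversalArrow_counitApp {G : EnrichedFunctor V B A} (adj : VAdjunction V J G)
    (Y : B) : IsUniversalArrow J (adj.counitApp Y) :=
  fun X => (adj.homIso X Y).isIso_hom

namespace IsUniversalArrow

lemma hom_ext {g : A} {Y : B} {e : EHom V (J.obj g) Y} (he : IsUniversalArrow J e) {X : A}
    {M : V} {s t : M ⟶ (X ⟶[V] g)} (h : s ≫ transpose J e X = t ≫ transpose J e X) : s = t :=
  have := he X
  (cancel_mono _).1 h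

/-- The inverse of transposition along a universal arrow, sending `J X ⟶ Y` to its unique
factorization `X ⟶ g`. -/
noncomputable def lift {g : A} {Y : B} {e : EHom V (J.obj g) Y} (he : IsUniversalArrow J e)
    (X : A) : (J.obj X ⟶[V] Y) ⟶ (X ⟶[V] g) :=
  have := he X
  inv (transpose J e X)

lemma lift_transpose {g : A} {Y : B} {e : EHom V (J.obj g) Y} (he : IsUniversalArrow J e)
    (X : A) : he.lift X ≫ transpose J e X = 𝟙 _ :=
  have := he X
  IsIso.inv_hom_id _

variable {G : B → A} {e : ∀ Y, EHom V (J.obj (G Y)) Y} (he : ∀ Y, IsUniversalArrow J (e Y))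

/-- The action `f ↦ G f` on hom-objects of the right adjoint, determined by `e ∘ J(G f) = f ∘ e`. -/
noncomputable def rightAdjointMap (Y Z : B) : (Y ⟶[V] Z) ⟶ (G Y ⟶[V] G Z) :=
  precompV V (e Y) Z ≫ (he Z).lift (G Y)

lemma rightAdjointMap_transpose (Y Z : B) :
    rightAdjointMap he Y Z ≫ transpose J (e Z) (G Y) = precompV V (e Y) Z := by
  rw [rightAdjointMap, Category.assoc, lift_transpose, Category.comp_id]

lemma rightAdjointMap_map_postcompV (Y Z : B) :
    (rightAdjointMap he Y Z ≫ J.map (G Y) (G Z)) ≫ postcompV V (J.obj (G Y)) (e Z) =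
      precompV V (e Y) Z :=
  (Category.assoc _ _ _).trans (rightAdjointMap_transpose he Y Z)

lemma rightAdjointMap_id (Y : B) : eId V Y ≫ rightAdjointMap he Y Y = eId V (G Y) :=
  (he Y).hom_ext <| by
    rw [Category.assoc, rightAdjointMap_transpose, ehom_precompV, vcomp_eId, eId_transpose]

lemma rightAdjointMap_comp (X Y Z : B) :
    eComp V X Y Z ≫ rightAdjointMap he X Z =
      (rightAdjointMap he X Y ⊗ₘ rightAdjointMap he Y Z) ≫ eComp V (G X) (G Y) (G Z) :=
  (he Z).hom_ext <| by
    rw [Category.assoc, Category.assoc, rightAdjointMap_transpose, eComp_transpose,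
      tensorHom_comp_tensorHom_assoc, rightAdjointMap_transpose, tensorHom_def_assoc,
      whiskerLeft_precompV_eComp, ← comp_whiskerRight_assoc, rightAdjointMap_map_postcompV,
      eComp_precompV]

/-- The right `V`-adjoint of `J` assembled from a family of universal arrows. -/
noncomputable def rightAdjoint : EnrichedFunctor V B A where
  obj := G
  map := rightAdjointMap he
  map_id := rightAdjointMap_id he
  map_comp := rightAdjointMap_comp he

/-- The unit `X ⟶ G J X`, the factorization of the identity of `J X` through the universal arrow. -/
noncomputable def unit (X : A) : EHom V X (G (J.obj X)) :=
  eId V (J.obj X) ≫ (he (J.obj X)).lift X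

lemma unit_transpose (X : A) : unit he X ≫ transpose J (e (J.obj X)) X = eId V (J.obj X) := by
  rw [unit, Category.assoc, lift_transpose, Category.comp_id]

lemma rightAdjointMap_precompV_unit (X : A) (Z : B) :
    rightAdjointMap he (J.obj X) Z ≫ precompV V (unit he X) (G Z) = (he Z).lift X :=
  (he Z).hom_ext <| by
    rw [Category.assoc, precompV_transpose, ← Category.assoc, rightAdjointMap_transpose,
      ← precompV_vcomp, ← ehom_transpose, unit_transpose, precompV_eId, lift_transpose]

lemma postcompV_unit (X Y : A) :
    postcompV V X (unit he Y) =
      J.map X Y ≫ rightAdjointMap he (J.obj X) (J.obj Y) ≫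
        precompV V (unit he X) (G (J.obj Y)) :=
  (he (J.obj Y)).hom_ext <| by
    rw [postcompV_transpose, unit_transpose, transpose_eId, rightAdjointMap_precompV_unit,
      Category.assoc, lift_transpose, Category.comp_id]

lemma vcomp_unit_rightAdjointMap (Y : B) :
    vcomp V (unit he (G Y)) (e Y ≫ rightAdjointMap he (J.obj (G Y)) Y) = eId V (G Y) :=
  (he Y).hom_ext <| by
    rw [← ehom_precompV, Category.assoc (e Y), rightAdjointMap_precompV_unit, Category.assoc,
      lift_transpose, Category.comp_id, eId_transpose]

/-- The `V`-adjunction assembled from a family of universal arrows, which form its counit. -/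
noncomputable def adjunction : VAdjunction V J (rightAdjoint he) where
  η :=
    { app := unit he
      naturality := fun X Y => (tensorHom_eComp_eq_iff _ _ _ _).2 <|
        (Category.id_comp _).trans ((postcompV_unit he X Y).trans (Category.assoc _ _ _).symm) }
  ε :=
    { app := e
      naturality := fun Y Z => (tensorHom_eComp_eq_iff _ _ _ _).2 <|
        (rightAdjointMap_map_postcompV he Y Z).trans (Category.id_comp _).symm }
  left_triangle X := (ehom_transpose J (e (J.obj X)) (unit he X)).symm.trans (unit_transpose he X)
  right_triangle := vcomp_unit_rightAdjointMap he

end IsUniversalArrow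

theorem exists_rightAdjoint_iff_exists_isUniversalArrow (J : EnrichedFunctor V A B) :
    (∃ G : EnrichedFunctor V B A, Nonempty (VAdjunction V J G)) ↔
      ∀ Y : B, ∃ (g : A) (e : EHom V (J.obj g) Y), IsUniversalArrow J e := by
  refine ⟨fun ⟨G, ⟨adj⟩⟩ Y => ⟨G.obj Y, adj.counitApp Y, adj.isUniversalArrow_counitApp Y⟩,
    fun h => ?_⟩
  choose G e he using h
  exact ⟨IsUniversalArrow.rightAdjoint he, ⟨IsUniversalArrow.adjunction he⟩⟩

end UniversalArrow

section Equalizer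

variable {V : Type u} [Category.{v} V]

/-- `i` is an equalizer of `f` and `g` in `V`, as a property of the arrow `i`: the fork condition is
part of the assertion. -/
def IsEqualizer {P X Y : V} (f g : X ⟶ Y) (i : P ⟶ X) : Prop :=
  ∃ w : i ≫ f = i ≫ g, Nonempty (IsLimit (Fork.ofι i w))

lemma IsEqualizer.symm {P X Y : V} {f g : X ⟶ Y} {i : P ⟶ X} (h : IsEqualizer f g i) :
    IsEqualizer g f i := by
  obtain ⟨w, ⟨h⟩⟩ := h
  exact ⟨w.symm, ⟨Fork.IsLimit.mk' _ fun s =>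
    ⟨Fork.IsLimit.lift h s.ι s.condition.symm, Fork.IsLimit.lift_ι' h s.ι s.condition.symm,
      fun hm => Fork.IsLimit.hom_ext h (hm.trans (Fork.IsLimit.lift_ι' h _ _).symm)⟩⟩⟩

lemma isEqualizer_comp_iso_iff {P X Y X' Y' : V} {f g : X ⟶ Y} {f' g' : X' ⟶ Y'} {i : P ⟶ X}
    (x : X ≅ X') (y : Y ≅ Y') (hf : f ≫ y.hom = x.hom ≫ f') (hg : g ≫ y.hom = x.hom ≫ g') :
    IsEqualizer f' g' (i ≫ x.hom) ↔ IsEqualizer f g i := by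
  have hw : i ≫ f = i ≫ g ↔ (i ≫ x.hom) ≫ f' = (i ≫ x.hom) ≫ g' := by
    rw [Category.assoc, Category.assoc, ← hf, ← hg, ← Category.assoc, ← Category.assoc,
      cancel_mono]
  have nonempty_isLimit_iff (w w') : Nonempty (IsLimit (Fork.ofι i w)) ↔
      Nonempty (IsLimit (Fork.ofι (i ≫ x.hom) w')) :=
    (Fork.isLimitEquivOfIsos _ _ x y (Iso.refl _) hf.symm hg.symm
      (Category.id_comp _)).nonempty_congr
  exact ⟨fun ⟨w, h⟩ => ⟨hw.2 w, (nonempty_isLimit_iff _ w).2 h⟩,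
    fun ⟨w, h⟩ => ⟨hw.1 w, (nonempty_isLimit_iff w _).1 h⟩⟩

lemma IsEqualizer.exists_comp_eq {P T X Y : V} {f g : X ⟶ Y} {i : P ⟶ X}
    (h : IsEqualizer f g i) {k : T ⟶ X} (hk : k ≫ f = k ≫ g) : ∃ l, l ≫ i = k := by
  obtain ⟨w, ⟨h⟩⟩ := h
  exact ⟨Fork.IsLimit.lift h k hk, Fork.IsLimit.lift_ι' h k hk⟩

lemma IsEqualizer.comp_iff_isIso {P P' X Y : V} {f g : X ⟶ Y} {i : P ⟶ X}
    (h : IsEqualizer f g i) (k : P' ⟶ P) : IsEqualizer f g (k ≫ i) ↔ IsIso k := by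
  obtain ⟨w, ⟨h⟩⟩ := h
  have w' : (k ≫ i) ≫ f = (k ≫ i) ≫ g := by rw [Category.assoc, w, Category.assoc]
  have hk : h.lift (Fork.ofι (k ≫ i) w') = k :=
    Fork.IsLimit.hom_ext h (Fork.IsLimit.lift_ι' h _ w')
  rw [← hk, ← h.nonempty_isLimit_iff_isIso_lift, hk]
  exact exists_prop_of_true w'

end Equalizer

section Triangle

variable {V : Type u} [Category.{v} V] [MonoidalCategory V]
  {A : Type u₁} [EnrichedCategory V A] {B : Type u₂} [EnrichedCategory V B]
  {C : Type u₃} [EnrichedCategory V C]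

lemma isVEqualizer_iff {a b : A} {q r : EHom V a b} {g : A} {i : EHom V g a} :
    IsVEqualizer V q r g i ↔
      ∀ W : A, IsEqualizer (postcompV V W q) (postcompV V W r) (postcompV V W i) :=
  ⟨fun h W => ⟨h.w W, h.isLimit W⟩, fun h => ⟨fun W => (h W).1, fun W => (h W).2⟩⟩

variable (J : EnrichedFunctor V A B) (L : EnrichedFunctor V B C) (R : EnrichedFunctor V C A)
  (U : EnrichedFunctor V C B)
  (adj1 : VAdjunction V (EnrichedFunctor.comp V J L) R) (adj2 : VAdjunction V L U)

/-- The isomorphism `A(X, RZ) ≅ C(LJX, Z)` of the composite adjunction `LJ ⊣ R`, typed without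
reference to the composite `V`-functor. -/
def compHomIso (X : A) (Z : C) : (X ⟶[V] R.obj Z) ≅ (L.obj (J.obj X) ⟶[V] Z) := adj1.homIso X Z

/-- The counit `LJRZ ⟶ Z` of the composite adjunction `LJ ⊣ R`, typed without reference to the
composite `V`-functor. -/
def compCounitApp (Z : C) : EHom V (L.obj (J.obj (R.obj Z))) Z := adj1.counitApp Z

lemma compHomIso_hom (X : A) (Z : C) :
    (compHomIso J L R adj1 X Z).hom =
      J.map X (R.obj Z) ≫ transpose L (compCounitApp J L R adj1 Z) (J.obj X) :=
  Category.assoc _ _ _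

lemma postcompV_compHomIso_hom (W : A) {X : A} {Z : C} (f : EHom V X (R.obj Z)) :
    postcompV V W f ≫ (compHomIso J L R adj1 W Z).hom =
      J.map W X ≫ L.map (J.obj W) (J.obj X) ≫
        postcompV V (L.obj (J.obj W)) (f ≫ (compHomIso J L R adj1 X Z).hom) :=
  (adj1.postcompV_homIso_hom W f).trans (Category.assoc _ _ _)

lemma postcompV_qY_compHomIso_hom (W : A) (Y : B) :
    postcompV V W (qY V L R U adj2 Y) ≫ (compHomIso J L R adj1 W _).hom =
      (compHomIso J L R adj1 W _).hom ≫ parallelFst V J L U adj2 W Y :=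
  adj1.postcompV_map_homIso_hom W _

/-- The mate `U(μ_Z) ∘ η_{JRZ} : JRZ ⟶ UZ` of the equality `E = LJ`. -/
def mate (Z : C) : EHom V (J.obj (R.obj Z)) (U.obj Z) :=
  vcomp V (adj2.unitApp (J.obj (R.obj Z)))
    (compCounitApp J L R adj1 Z ≫ U.map (L.obj (J.obj (R.obj Z))) Z)

lemma mate_homIso_hom (Z : C) :
    mate J L R U adj1 adj2 Z ≫ (adj2.homIso (J.obj (R.obj Z)) Z).hom =
      compCounitApp J L R adj1 Z := by
  rw [mate, ← adj2.ehom_homIso_inv, Category.assoc, Iso.inv_hom_id, Category.comp_id]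

lemma transpose_mate (W : A) (Z : C) :
    transpose J (mate J L R U adj1 adj2 Z) W =
      (compHomIso J L R adj1 W Z).hom ≫ (adj2.homIso (J.obj W) Z).inv := by
  rw [Iso.eq_comp_inv, transpose, Category.assoc, adj2.postcompV_homIso_hom, mate_homIso_hom]
  exact (compHomIso_hom J L R adj1 W Z).symm

lemma rY_compHomIso_hom (Y : B) :
    rY V J L R U adj1 adj2 Y ≫ (compHomIso J L R adj1 _ _).hom =
      mate J L R U adj1 adj2 (L.obj Y) ≫
        L.map (J.obj (R.obj (L.obj Y))) (U.obj (L.obj Y)) := by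
  rw [← Iso.eq_comp_inv]
  exact (congrArg (vcomp V (adj1.unitApp _)) (Category.assoc _ _ _).symm).trans
    (adj1.ehom_homIso_inv _).symm

lemma postcompV_rY_compHomIso_hom (W : A) (Y : B) :
    postcompV V W (rY V J L R U adj1 adj2 Y) ≫ (compHomIso J L R adj1 W _).hom =
      (compHomIso J L R adj1 W _).hom ≫ parallelSnd V J L U adj2 W Y := by
  have hSnd : parallelSnd V J L U adj2 W Y =
      (adj2.homIso (J.obj W) (L.obj Y)).inv ≫ L.map (J.obj W) (U.obj (L.obj Y)) :=
    (Category.assoc _ _ _).symm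
  rw [hSnd, ← Category.assoc, ← transpose_mate, postcompV_compHomIso_hom, rY_compHomIso_hom,
    map_postcompV, transpose, Category.assoc]

variable {J L R U adj1 adj2}

lemma isVEqualizer_iff_isEqualizer {Y : B} {g : A} {i : EHom V g (R.obj (L.obj Y))} :
    IsVEqualizer V (rY V J L R U adj1 adj2 Y) (qY V L R U adj2 Y) g i ↔
      ∀ W : A, IsEqualizer (parallelFst V J L U adj2 W Y) (parallelSnd V J L U adj2 W Y)
        (postcompV V W i ≫ (compHomIso J L R adj1 W (L.obj Y)).hom) := by
  refine isVEqualizer_iff.trans (forall_congr' fun W => ?_)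
  rw [isEqualizer_comp_iso_iff _ _ (postcompV_qY_compHomIso_hom J L R U adj1 adj2 W Y)
    (postcompV_rY_compHomIso_hom J L R U adj1 adj2 W Y)]
  exact ⟨IsEqualizer.symm, IsEqualizer.symm⟩

lemma postcompV_compHomIso_hom_eq_transpose_map {Y : B} {g : A} {i : EHom V g (R.obj (L.obj Y))}
    {e : EHom V (J.obj g) Y}
    (h : i ≫ (compHomIso J L R adj1 g (L.obj Y)).hom = e ≫ L.map (J.obj g) Y) (W : A) :
    postcompV V W i ≫ (compHomIso J L R adj1 W (L.obj Y)).hom =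
      transpose J e W ≫ L.map (J.obj W) Y := by
  rw [postcompV_compHomIso_hom, h, transpose_map, transpose]

lemma isVEqualizer_iff_isUniversalArrow {Y : B}
    (hL : ∀ W : A, IsEqualizer (parallelFst V J L U adj2 W Y) (parallelSnd V J L U adj2 W Y)
      (L.map (J.obj W) Y)) {g : A} {i : EHom V g (R.obj (L.obj Y))} {e : EHom V (J.obj g) Y}
    (h : i ≫ (compHomIso J L R adj1 g (L.obj Y)).hom = e ≫ L.map (J.obj g) Y) :
    IsVEqualizer V (rY V J L R U adj1 adj2 Y) (qY V L R U adj2 Y) g i ↔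
      IsUniversalArrow J e := by
  refine isVEqualizer_iff_isEqualizer.trans (forall_congr' fun W => ?_)
  rw [postcompV_compHomIso_hom_eq_transpose_map h, (hL W).comp_iff_isIso]

theorem exists_isVEqualizer_iff_exists_isUniversalArrow {Y : B}
    (hL : ∀ W : A, IsEqualizer (parallelFst V J L U adj2 W Y) (parallelSnd V J L U adj2 W Y)
      (L.map (J.obj W) Y)) (g : A) :
    (∃ i, IsVEqualizer V (rY V J L R U adj1 adj2 Y) (qY V L R U adj2 Y) g i) ↔
      ∃ e : EHom V (J.obj g) Y, IsUniversalArrow J e := by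
  constructor
  · rintro ⟨i, hi⟩
    have hw := congrArg (eId V g ≫ ·) (isVEqualizer_iff_isEqualizer.1 hi g).1
    simp only [← Category.assoc, eId_postcompV] at hw
    obtain ⟨e, he⟩ := (hL g).exists_comp_eq hw
    exact ⟨e, (isVEqualizer_iff_isUniversalArrow hL he.symm).1 hi⟩
  · rintro ⟨e, he⟩
    refine ⟨(e ≫ L.map (J.obj g) Y) ≫ (compHomIso J L R adj1 g (L.obj Y)).inv,
      (isVEqualizer_iff_isUniversalArrow hL ?_).2 he⟩
    rw [Category.assoc, Iso.inv_hom_id, Category.comp_id]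

end Triangle

theorem enriched_adjoint_triangle_general
    (V : Type u) [Category.{v} V] [MonoidalCategory V]
    {A : Type u₁} [EnrichedCategory V A] {B : Type u₂} [EnrichedCategory V B]
    {C : Type u₃} [EnrichedCategory V C]
    (J : EnrichedFunctor V A B) (L : EnrichedFunctor V B C) (R : EnrichedFunctor V C A)
    (U : EnrichedFunctor V C B)
    (adj1 : VAdjunction V (EnrichedFunctor.comp V J L) R) (adj2 : VAdjunction V L U)
    (hL : ∀ (A' : A) (Y : B), IsEqualizer (parallelFst V J L U adj2 A' Y)
      (parallelSnd V J L U adj2 A' Y) (L.map (J.obj A') Y)) :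
    ((∃ G : EnrichedFunctor V B A, Nonempty (VAdjunction V J G)) ↔
      ∀ Y : B, HasVEqualizer V (rY V J L R U adj1 adj2 Y) (qY V L R U adj2 Y)) ∧
    (∀ (G : EnrichedFunctor V B A), VAdjunction V J G → ∀ Y : B,
      ∃ i, IsVEqualizer V (rY V J L R U adj1 adj2 Y) (qY V L R U adj2 Y) (G.obj Y) i) := by
  have isVEqualizer_iff_universal (Y : B) (g : A) := exists_isVEqualizer_iff_exists_isUniversalArrow
    (adj1 := adj1) (fun W => hL W Y) g
  constructor
  · rw [exists_rightAdjoint_iff_exists_isUniversalArrow]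
    exact forall_congr' fun Y => exists_congr fun g => (isVEqualizer_iff_universal Y g).symm
  · intro G adj Y
    exact (isVEqualizer_iff_universal Y (G.obj Y)).2
      ⟨adj.counitApp Y, adj.isUniversalArrow_counitApp Y⟩

/-- **Enriched Adjoint Triangle Theorem** (Proposition 1.1 of "On Biadjoint Triangles").

Let `(L ⊣ U, η, ε) : 𝔅 → ℭ` and `(E ⊣ R, ρ, μ) : 𝔄 → ℭ` (with `E = L ∘ J`) be
`V`-adjunctions.  Assume that for all `A, Y` the diagram
`𝔅(JA, Y) → ℭ(EA, LY) ⇉ ℭ(EA, LULY)` is an equalizer in `V`.  Then `J` has a right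
`V`-adjoint iff for every `Y` the `V`-equalizer of
`RL(U(μ_{LY})η_{JRLY})ρ_{RLY}, RL(η_Y) : RLY ⇉ RLULY` exists in `𝔄`; and in that case
the value `G Y` of any right `V`-adjoint is given by this `V`-equalizer. -/
theorem enriched_adjoint_triangle
    (V : Type u) [Category.{v} V] [MonoidalCategory V] [SymmetricCategory V]
    [MonoidalClosed V] [HasLimits V] [HasColimits V]
    {A : Type u₁} [EnrichedCategory V A] {B : Type u₂} [EnrichedCategory V B]
    {C : Type u₃} [EnrichedCategory V C]
    (J : EnrichedFunctor V A B) (L : EnrichedFunctor V B C) (R : EnrichedFunctor V C A)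
    (U : EnrichedFunctor V C B)
    (adj1 : VAdjunction V (EnrichedFunctor.comp V J L) R) (adj2 : VAdjunction V L U)
    (hw : ∀ (A' : A) (Y : B),
      L.map (J.obj A') Y ≫ parallelFst V J L U adj2 A' Y =
        L.map (J.obj A') Y ≫ parallelSnd V J L U adj2 A' Y)
    (heq : ∀ (A' : A) (Y : B),
      Nonempty (IsLimit (Fork.ofι (L.map (J.obj A') Y) (hw A' Y)))) :
    ((∃ G : EnrichedFunctor V B A, Nonempty (VAdjunction V J G)) ↔
      ∀ Y : B, HasVEqualizer V (rY V J L R U adj1 adj2 Y) (qY V L R U adj2 Y)) ∧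
    (∀ (G : EnrichedFunctor V B A), VAdjunction V J G → ∀ Y : B,
      ∃ i, IsVEqualizer V (rY V J L R U adj1 adj2 Y) (qY V L R U adj2 Y) (G.obj Y) i) :=
  enriched_adjoint_triangle_general V J L R U adj1 adj2 fun W Y => ⟨hw W Y, heq W Y⟩

end EnrichedAdjointTriangles
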